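/- Let K and L be number fields, let R be a sieve in residue form for K and S a sieve in residue form for L, and let A : 𝓞_K → 𝓞_L be a ℤ-linear map. Suppose there are infinitely many prime numbers p satisfying all of the following: (a) for every x ∈ 𝓞_K such that x ∉ R_𝔭 for all prime ideals 𝔭 of 𝓞_K dividing p, one has A(x) ∉ S_𝔮 for all prime ideals 𝔮 of 𝓞_L dividing p; (b) for every prime ideal 𝔮 of 𝓞_L dividing p there exists x ∈ 𝓞_K with A(x) ∈ S_𝔮; (c) ∑_{𝔭 ∣ p} meas(R_𝔭) < 1, the sum over prime ideals 𝔭 of 𝓞_K dividing p; (d) p splits completely in both K and L. Then there exist a field embedding τ : K → L and an element ε ∈ 𝓞_L such that A(x) = ε·τ(x) for all x ∈ 𝓞_K. -/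

import Mathlib

open NumberField

/-- A sieve in residue form for a number field `K`. -/
structure ResidueSieve (K : Type*) [Field K] [NumberField K] where
  k : Ideal (𝓞 K) → ℕ
  k_pos : ∀ P : Ideal (𝓞 K), 1 ≤ k P
  R : (P : Ideal (𝓞 K)) → Set (𝓞 K ⧸ P ^ k P)

/-- `x ∈ R_𝔭`: the residue class of `x` modulo `𝔭^{k(𝔭)}` belongs to `R 𝔭`. -/
def ResidueSieve.Mem {K : Type*} [Field K] [NumberField K] (S : ResidueSieve K)
    (P : Ideal (𝓞 K)) (x : 𝓞 K) : Prop :=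
  Ideal.Quotient.mk (P ^ S.k P) x ∈ S.R P

/-- The Haar measure of the sieve set at `P`. -/
noncomputable def ResidueSieve.meas {K : Type*} [Field K] [NumberField K]
    (S : ResidueSieve K) (P : Ideal (𝓞 K)) : ℝ :=
  (Nat.card ↥(S.R P) : ℝ) / (Ideal.absNorm P : ℝ) ^ (S.k P)

/-- A prime number `p` splits completely in a number field `K` if every prime ideal of
`𝓞 K` lying above `p` has ramification index 1 and residue degree 1. -/
def SplitsCompletely (K : Type*) [Field K] [NumberField K] (p : ℕ) : Prop :=
  ∀ P : Ideal (𝓞 K), P.IsPrime → (p : 𝓞 K) ∈ P →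
    Ideal.ramificationIdx' (Ideal.span {(p : ℤ)}) P = 1 ∧
    Ideal.inertiaDeg' (Ideal.span {(p : ℤ)}) P = 1

/-!
Take `p` as in the hypothesis and a prime `Q` of `𝓞 L` above `p`, so that every element of `𝓞 L` is
congruent to an integer modulo each power of `Q`. If `A` mapped no prime above `p` into `Q`, every
`P ^ k` with `P` above `p` would contain some `y` with `A y` invertible modulo `Q`, and subtracting
integer multiples of `y` shows that the subgroup `H` of all `h` with `A h ∈ Q ^ m` surjects onto
`𝓞 K ⧸ P ^ k`. By the bound on the measures, the coset `x₀ + H` of an `x₀` with `A x₀ ∈ S_Q` would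
then contain an element avoiding every `R_P`, although `A` maps that coset into `S_Q`.

So `A` maps some `P` above `p` into `Q`. As `𝓞 K ⧸ P` is the prime field, this gives
`A x * A y ≡ A 1 * A (x * y)` modulo `Q`. The congruence holds for infinitely many `p`, hence is an
equality, and `x ↦ A x / A 1` is a ring homomorphism.
-/

theorem ResidueSieve.mem_congr {K : Type*} [Field K] [NumberField K] {S : ResidueSieve K}
    {Q : Ideal (𝓞 K)} {x y : 𝓞 K} (h : x - y ∈ Q ^ S.k Q) : S.Mem Q x ↔ S.Mem Q y := by
  rw [ResidueSieve.Mem, ResidueSieve.Mem, Ideal.Quotient.eq.2 h]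

/-- `R.Survives p x`: the element `x` is not removed by the sieve `R` at any prime ideal
above `p`. -/
def ResidueSieve.Survives {K : Type*} [Field K] [NumberField K] (R : ResidueSieve K) (p : ℕ)
    (x : 𝓞 K) : Prop :=
  ∀ P : Ideal (𝓞 K), P.IsPrime → (p : 𝓞 K) ∈ P → ¬ R.Mem P x

/-- `p` is a prime number and `P` is a prime ideal above `p` with ramification index and residue
degree 1. Being above `p` is part of the last condition, as `Ideal.inertiaDeg'` takes the junk
value `0` otherwise. -/
structure IsSplitPrime {B : Type*} [CommRing B] (p : ℕ) (P : Ideal B) : Prop where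
  prime : p.Prime
  isPrime : P.IsPrime
  ramificationIdx'_eq_one : Ideal.ramificationIdx' (Ideal.span {(p : ℤ)}) P = 1
  inertiaDeg'_eq_one : Ideal.inertiaDeg' (Ideal.span {(p : ℤ)}) P = 1

theorem SplitsCompletely.isSplitPrime {K : Type*} [Field K] [NumberField K] {p : ℕ}
    (h : SplitsCompletely K p) (hp : p.Prime) {P : Ideal (𝓞 K)} (hP : P.IsPrime)
    (hpP : (p : 𝓞 K) ∈ P) : IsSplitPrime p P :=
  ⟨hp, hP, (h P hP hpP).1, (h P hP hpP).2⟩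

theorem SplitsCompletely.exists_isSplitPrime {K : Type*} [Field K] [NumberField K] {p : ℕ}
    (h : SplitsCompletely K p) (hp : p.Prime) : ∃ Q : Ideal (𝓞 K), IsSplitPrime p Q := by
  have := Fact.mk hp
  have := Int.ideal_span_isMaximal_of_prime p
  obtain ⟨Q, hQ, hQp⟩ :=
    Ideal.exists_maximal_ideal_liesOver_of_isIntegral (S := 𝓞 K) (Ideal.span {(p : ℤ)})
  refine ⟨Q, h.isSplitPrime hp hQ.isPrime ?_⟩
  have hpQ := Ideal.mem_span_singleton_self (p : ℤ)
  rw [hQp.over, Ideal.mem_comap] at hpQ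
  simpa using hpQ

open scoped Pointwise in
theorem exists_forall_add_map_notMem {G ι : Type*} [AddGroup G] [Fintype ι] {B : ι → Type*}
    [∀ i, AddGroup (B i)] (f : ∀ i, G →+ B i) (hf : ∀ i, Function.Surjective (f i))
    (b : ∀ i, B i) (T : ∀ i, Set (B i)) [∀ i, Finite (T i)]
    (hT : ∑ i, (Nat.card (T i) : ℝ) / Nat.card (B i) < 1) :
    ∃ g, ∀ i, b i + f i g ∉ T i := by
  classical
  by_contra! hcon
  have (i : ι) : Fintype (T i) := Fintype.ofFinite _
  choose g hg using hf
  -- The bad elements for `t ∈ T i` form a coset of `(f i).ker`, of index `Nat.card (B i)`.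
  have hcover : ⋃ k ∈ (Finset.univ : Finset (Σ i, T i)),
      g k.1 (-b k.1 + k.2.1) +ᵥ ((f k.1).ker : Set G) = Set.univ := by
    refine Set.eq_univ_of_forall fun x => ?_
    obtain ⟨i, hi⟩ := hcon x
    refine Set.mem_iUnion₂.2 ⟨⟨i, _, hi⟩, Finset.mem_univ _, ?_⟩
    simp [Set.mem_vadd_set_iff_neg_vadd_mem, AddMonoidHom.mem_ker, hg]
  have hindex (i : ι) : (f i).ker.index = Nat.card (B i) := by
    rw [AddSubgroup.index_ker, AddMonoidHom.range_eq_top.2 fun y => ⟨g i y, hg i y⟩,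
      AddSubgroup.card_top]
  have hone := AddSubgroup.one_le_sum_inv_index_of_leftCoset_cover hcover
  rw [← Finset.univ_sigma_univ, Finset.sum_sigma] at hone
  simp only [hindex, Finset.sum_const, Finset.card_univ, nsmul_eq_mul, ← div_eq_mul_inv,
    ← Nat.card_eq_fintype_card] at hone
  rw [← Rat.cast_le (K := ℝ)] at hone
  push_cast at hone
  exact hT.not_ge hone

theorem ResidueSieve.exists_survives_add {K : Type*} [Field K] [NumberField K]
    (R : ResidueSieve K) {p : ℕ} (hp : p ≠ 0)
    (hsum : ∑' P : {P : Ideal (𝓞 K) // P.IsPrime ∧ (p : 𝓞 K) ∈ P}, R.meas P.1 < 1)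
    (H : AddSubgroup (𝓞 K)) (x₀ : 𝓞 K)
    (hH : ∀ P : Ideal (𝓞 K), P.IsPrime → (p : 𝓞 K) ∈ P → ∀ z, ∃ h ∈ H, z - h ∈ P ^ R.k P) :
    ∃ h ∈ H, R.Survives p (x₀ + h) := by
  have hp' : (p : 𝓞 K) ≠ 0 := Nat.cast_ne_zero.2 hp
  have : Finite {P : Ideal (𝓞 K) // P.IsPrime ∧ (p : 𝓞 K) ∈ P} :=
    ((Ring.HasFiniteQuotients.finite_setOfPred_mem _ hp').subset fun _ hP => hP.2).to_subtype
  have := Fintype.ofFinite {P : Ideal (𝓞 K) // P.IsPrime ∧ (p : 𝓞 K) ∈ P}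
  have (P : {P : Ideal (𝓞 K) // P.IsPrime ∧ (p : 𝓞 K) ∈ P}) : Finite (𝓞 K ⧸ P.1 ^ R.k P.1) :=
    Ring.HasFiniteQuotients.finiteQuotient
      (pow_ne_zero _ (Submodule.ne_bot_iff _ |>.2 ⟨p, P.2.2, hp'⟩))
  have hcard (P : Ideal (𝓞 K)) :
      R.meas P = (Nat.card (R.R P) : ℝ) / Nat.card (𝓞 K ⧸ P ^ R.k P) := by
    rw [ResidueSieve.meas, ← Nat.cast_pow, ← map_pow, Ideal.absNorm_apply,
      Submodule.cardQuot_apply]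
  simp only [tsum_fintype, hcard] at hsum
  obtain ⟨h, hh⟩ := exists_forall_add_map_notMem
    (fun P : {P : Ideal (𝓞 K) // P.IsPrime ∧ (p : 𝓞 K) ∈ P} =>
      (Ideal.Quotient.mk (P.1 ^ R.k P.1)).toAddMonoidHom.comp H.subtype)
    (fun P y => by
      obtain ⟨z, rfl⟩ := Ideal.Quotient.mk_surjective y
      obtain ⟨h, hh, hzh⟩ := hH P.1 P.2.1 P.2.2 z
      exact ⟨⟨h, hh⟩, (Ideal.Quotient.eq.2 hzh).symm⟩)
    (fun P => Ideal.Quotient.mk (P.1 ^ R.k P.1) x₀) (fun P => R.R P.1) hsum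
  refine ⟨h, h.2, fun P hP hpP hmem => hh ⟨P, hP, hpP⟩ ?_⟩
  rwa [ResidueSieve.Mem, map_add] at hmem

theorem pow_notMem_pow_succ_of_notMem_sq {B : Type*} [CommRing B] [IsDedekindDomain B]
    {P : Ideal B} [hP : P.IsPrime] (hP0 : P ≠ ⊥) {a : B} (ha : a ∉ P ^ 2) (k : ℕ) :
    a ^ k ∉ P ^ (k + 1) := by
  rw [← Ideal.dvd_span_singleton] at ha ⊢
  have hle : emultiplicity P (Ideal.span {a}) ≤ 1 :=
    Order.le_of_lt_succ (emultiplicity_lt_iff_not_dvd.2 ha)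
  rw [← emultiplicity_lt_iff_not_dvd, ← Ideal.span_singleton_pow,
    emultiplicity_pow (Ideal.prime_of_isPrime hP0 hP)]
  calc (k : ℕ∞) * emultiplicity P (Ideal.span {a}) ≤ k * 1 := by gcongr
    _ < (k + 1 : ℕ) := by simpa using mod_cast k.lt_succ_self

namespace IsSplitPrime

variable {B : Type*} [CommRing B] {p : ℕ} {P : Ideal B}

theorem liesOver (hP : IsSplitPrime p P) : P.LiesOver (Ideal.span {(p : ℤ)}) := by
  by_contra hover
  have h := hP.inertiaDeg'_eq_one
  rw [Ideal.inertiaDeg', dif_neg fun heq => hover ⟨heq.symm⟩] at h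
  exact zero_ne_one h

theorem intCast_mem_iff (hP : IsSplitPrime p P) {n : ℤ} : (n : B) ∈ P ↔ (p : ℤ) ∣ n := by
  rw [← Ideal.mem_span_singleton, hP.liesOver.over, Ideal.mem_comap, eq_intCast]

theorem natCast_mem (hP : IsSplitPrime p P) : (p : B) ∈ P :=
  mod_cast hP.intCast_mem_iff.2 dvd_rfl

theorem natCast_notMem_sq (hP : IsSplitPrime p P) : (p : B) ∉ P ^ 2 := by
  have hmap : (Ideal.span {(p : ℤ)}).map (algebraMap ℤ B) = Ideal.span {(p : B)} := by
    simp [Ideal.map_span]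
  rw [← Ideal.span_singleton_le_iff_mem, ← hmap, ← Ideal.ramificationIdx'_ne_one_iff, not_not]
  · exact hP.ramificationIdx'_eq_one
  · rw [hmap, Ideal.span_singleton_le_iff_mem]
    exact hP.natCast_mem

theorem exists_int_sub_mem (hP : IsSplitPrime p P) (x : B) : ∃ n : ℤ, x - n ∈ P := by
  have := hP.liesOver
  have := Fact.mk hP.prime
  have := Int.ideal_span_isMaximal_of_prime p
  let := Ideal.Quotient.field (Ideal.span {(p : ℤ)})
  have hrank := hP.inertiaDeg'_eq_one
  rw [Ideal.inertiaDeg'_algebraMap] at hrank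
  obtain ⟨y, hy⟩ :=
    (Module.Free.bijective_algebraMap_of_finrank_eq_one hrank).2 (Ideal.Quotient.mk P x)
  obtain ⟨n, rfl⟩ := Ideal.Quotient.mk_surjective y
  exact ⟨n, Ideal.Quotient.eq.1 (by simpa using hy.symm)⟩

theorem absNorm_eq [IsDedekindDomain B] [Module.Free ℤ B] [Module.Finite ℤ B]
    (hP : IsSplitPrime p P) : Ideal.absNorm P = p := by
  have := hP.liesOver
  rw [Ideal.absNorm_eq_pow_inertiaDeg' P hP.prime, hP.inertiaDeg'_eq_one, pow_one]

theorem ne_bot [CharZero B] (hP : IsSplitPrime p P) : P ≠ ⊥ :=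
  (Submodule.ne_bot_iff P).2 ⟨p, hP.natCast_mem, Nat.cast_ne_zero.2 hP.prime.ne_zero⟩

theorem exists_int_sub_mem_pow [IsDedekindDomain B] [CharZero B] (hP : IsSplitPrime p P) (k : ℕ)
    (x : B) : ∃ n : ℤ, x - n ∈ P ^ k := by
  have := hP.isPrime
  induction k with
  | zero => exact ⟨0, by simp⟩
  | succ k ih =>
    obtain ⟨n, hn⟩ := ih
    obtain ⟨d, e, he, hde⟩ := Ideal.exists_mul_add_mem_pow_succ hP.ne_bot _ _
      (Ideal.pow_mem_pow hP.natCast_mem k)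
      (pow_notMem_pow_succ_of_notMem_sq hP.ne_bot hP.natCast_notMem_sq k) hn
    obtain ⟨m, hm⟩ := hP.exists_int_sub_mem d
    refine ⟨n + p ^ k * m, ?_⟩
    have hsplit : x - ((n + p ^ k * m : ℤ) : B) = (p : B) ^ k * (d - m) + e := by
      push_cast
      linear_combination -hde
    rw [hsplit]
    exact add_mem (Ideal.mul_mem_mul (Ideal.pow_mem_pow hP.natCast_mem k) hm) he

theorem exists_sub_zsmul_mem_pow [IsDedekindDomain B] [CharZero B] (hP : IsSplitPrime p P)
    {b : B} (hb : b ∉ P) (k : ℕ) (x : B) : ∃ n : ℤ, x - n • b ∈ P ^ k := by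
  have hmax : P.IsMaximal := hP.isPrime.isMaximal hP.ne_bot
  obtain ⟨w, hw⟩ : ∃ w, x - b * w ∈ P ^ k := by
    obtain ⟨w, hw⟩ := (Ideal.Quotient.isUnit_mk_pow_of_notMem P (n := k) hb).dvd
      (a := Ideal.Quotient.mk (P ^ k) x)
    obtain ⟨w, rfl⟩ := Ideal.Quotient.mk_surjective w
    exact ⟨w, Ideal.Quotient.eq.1 (by rw [hw, map_mul])⟩
  obtain ⟨n, hn⟩ := hP.exists_int_sub_mem_pow k w
  refine ⟨n, ?_⟩
  have hsplit : x - n • b = (x - b * w) + b * (w - n) := by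
    rw [zsmul_eq_mul]
    ring
  rw [hsplit]
  exact add_mem hw (Ideal.mul_mem_left _ _ hn)

end IsSplitPrime

theorem eq_zero_of_infinite_isSplitPrime {B : Type*} [CommRing B] [IsDedekindDomain B]
    [Module.Free ℤ B] [Module.Finite ℤ B] {d : B}
    (hd : {p : ℕ | ∃ Q : Ideal B, IsSplitPrime p Q ∧ d ∈ Q}.Infinite) : d = 0 := by
  by_contra hd0
  refine hd (((Ring.HasFiniteQuotients.finite_setOfPred_mem d hd0).image Ideal.absNorm).subset ?_)
  rintro p ⟨Q, hQ, hdQ⟩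
  exact ⟨Q, hdQ, hQ.absNorm_eq⟩

section

variable {B C : Type*} [CommRing B] [CommRing C] {p : ℕ} {P : Ideal B} {Q : Ideal C}
  (A : B →ₗ[ℤ] C)

theorem exists_mem_pow_map_notMem [IsDedekindDomain B] [CharZero B] (hP : IsSplitPrime p P)
    (hpQ : (p : C) ∈ Q) (hPQ : ∃ x ∈ P, A x ∉ Q) (k : ℕ) : ∃ y ∈ P ^ k, A y ∉ Q := by
  obtain ⟨x, hxP, hxQ⟩ := hPQ
  -- Subtracting a multiple of `p` moves `x` into `P ^ (k + 1)` and keeps `A x` modulo `Q`.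
  obtain ⟨n, hn⟩ := hP.exists_int_sub_mem_pow (k + 1) x
  have hnP : (n : B) ∈ P := by
    simpa using sub_mem hxP (Ideal.pow_le_self k.succ_ne_zero hn)
  obtain ⟨c, rfl⟩ := hP.intCast_mem_iff.1 hnP
  refine ⟨_, Ideal.pow_le_pow_right k.le_succ hn, fun hy => hxQ ?_⟩
  have hmap : A (x - ((p * c : ℤ) : B)) = A x - p * (c * A 1) := by
    rw [map_sub, ← zsmul_one, map_zsmul]
    simp [mul_assoc]
  rw [hmap] at hy
  simpa using add_mem hy (Ideal.mul_mem_right (c * A 1) _ hpQ)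

theorem exists_map_mem_pow_sub_mem_pow [IsDedekindDomain B] [CharZero B] [IsDedekindDomain C]
    [CharZero C] (hP : IsSplitPrime p P) (hQ : IsSplitPrime p Q) (hPQ : ∃ x ∈ P, A x ∉ Q)
    (k m : ℕ) (z : B) : ∃ h, A h ∈ Q ^ m ∧ z - h ∈ P ^ k := by
  obtain ⟨y, hyP, hyQ⟩ := exists_mem_pow_map_notMem A hP hQ.natCast_mem hPQ k
  obtain ⟨n, hn⟩ := hQ.exists_sub_zsmul_mem_pow hyQ m (A z)
  exact ⟨z - n • y, by rwa [map_sub, map_zsmul], by simpa using zsmul_mem hyP n⟩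

theorem map_mul_map_sub_mem (hPQ : ∀ x ∈ P, A x ∈ Q) {x : B} {n : ℤ} (hx : x - n ∈ P) (y : B) :
    A x * A y - A 1 * A (x * y) ∈ Q := by
  have hA (z : B) : A ((x - n) * z) = A (x * z) - n * A z := by
    rw [sub_mul, map_sub, ← zsmul_eq_mul, map_zsmul, zsmul_eq_mul]
  have hsplit : A x * A y - A 1 * A (x * y)
      = A y * A ((x - n) * 1) - A 1 * A ((x - n) * y) := by
    rw [hA, hA, mul_one]
    ring
  rw [hsplit]
  exact sub_mem (Ideal.mul_mem_left _ _ (hPQ _ (Ideal.mul_mem_right _ _ hx)))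
    (Ideal.mul_mem_left _ _ (hPQ _ (Ideal.mul_mem_right _ _ hx)))

end

theorem exists_ringHom_eq_map_one_mul {B L : Type*} [NonAssocSemiring B] [Field L] (f : B →+ L)
    (hone : f 1 ≠ 0) (hmul : ∀ x y, f x * f y = f 1 * f (x * y)) :
    ∃ τ : B →+* L, ∀ x, f x = f 1 * τ x :=
  ⟨{ toFun := fun x => f x / f 1
     map_one' := div_self hone
     map_zero' := by rw [map_zero, zero_div]
     map_add' := fun x y => by rw [map_add, add_div]
     map_mul' := fun x y => by
      rw [div_mul_div_comm, hmul, mul_div_mul_left _ _ hone] },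
    fun x => (mul_div_cancel₀ (f x) hone).symm⟩

theorem exists_ringHom_fractionRing_eq_map_one_mul {B K L : Type*} [CommRing B] [IsDomain B]
    [Algebra.IsIntegral ℤ B] [Field K] [Algebra B K] [IsFractionRing B K] [Field L] [CharZero L]
    (f : B →+ L) (hone : f 1 ≠ 0) (hmul : ∀ x y, f x * f y = f 1 * f (x * y)) :
    ∃ τ : K →+* L, ∀ x, f x = f 1 * τ (algebraMap B K x) := by
  obtain ⟨τ, hτ⟩ := exists_ringHom_eq_map_one_mul f hone hmul
  have hker : (RingHom.ker τ).comap (algebraMap ℤ B) = ⊥ := by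
    ext n
    simp [RingHom.mem_ker]
  have hinj : Function.Injective τ :=
    (RingHom.injective_iff_ker_eq_bot τ).2 (Ideal.eq_bot_of_comap_eq_bot hker)
  exact ⟨IsFractionRing.lift hinj, fun x => by rw [IsFractionRing.lift_algebraMap, hτ]⟩

section

variable {K L : Type*} [Field K] [NumberField K] [Field L] [NumberField L]
  {R : ResidueSieve K} {S : ResidueSieve L} {A : 𝓞 K →ₗ[ℤ] 𝓞 L}
  {p : ℕ} {Q : Ideal (𝓞 L)}

theorem exists_isSplitPrime_map_mem (hK : SplitsCompletely K p) (hQ : IsSplitPrime p Q)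
    (hsum : ∑' P : {P : Ideal (𝓞 K) // P.IsPrime ∧ (p : 𝓞 K) ∈ P}, R.meas P.1 < 1)
    (hRS : ∀ x, R.Survives p x → ¬ S.Mem Q (A x)) (hS : ∃ x, S.Mem Q (A x)) :
    ∃ P : Ideal (𝓞 K), IsSplitPrime p P ∧ ∀ x ∈ P, A x ∈ Q := by
  by_contra! hcon
  obtain ⟨x₀, hx₀⟩ := hS
  obtain ⟨h, hh, hsurv⟩ := R.exists_survives_add hQ.prime.ne_zero hsum
    ((Q ^ S.k Q).toAddSubgroup.comap A.toAddMonoidHom) x₀ fun P hP hpP =>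
      have hsplit := hK.isSplitPrime hQ.prime hP hpP
      exists_map_mem_pow_sub_mem_pow A hsplit hQ (hcon P hsplit) (R.k P) (S.k Q)
  refine hRS _ hsurv ((ResidueSieve.mem_congr ?_).2 hx₀)
  rwa [map_add, add_sub_cancel_left]

theorem exists_map_ne_zero (hp : p ≠ 0)
    (hsum : ∑' P : {P : Ideal (𝓞 K) // P.IsPrime ∧ (p : 𝓞 K) ∈ P}, R.meas P.1 < 1)
    (hRS : ∀ x, R.Survives p x → ¬ S.Mem Q (A x)) (hS : ∃ x, S.Mem Q (A x)) :
    ∃ x, A x ≠ 0 := by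
  by_contra! hA
  obtain ⟨x₀, hx₀⟩ := hS
  obtain ⟨h, -, hsurv⟩ := R.exists_survives_add hp hsum ⊤ 0
    fun P _ _ z => ⟨z, AddSubgroup.mem_top z, by simp⟩
  exact hRS _ hsurv (by rwa [hA, ← hA x₀])

theorem linear_map_sieve_conditions_general (R : ResidueSieve K) (S : ResidueSieve L)
    (A : 𝓞 K →ₗ[ℤ] 𝓞 L)
    (hinf : {p : ℕ | SplitsCompletely K p ∧
      (∑' P : {P : Ideal (𝓞 K) // P.IsPrime ∧ (p : 𝓞 K) ∈ P}, R.meas P.1) < 1 ∧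
      ∃ Q : Ideal (𝓞 L), IsSplitPrime p Q ∧ (∀ x, R.Survives p x → ¬ S.Mem Q (A x)) ∧
        ∃ x, S.Mem Q (A x)}.Infinite) :
    ∃ (τ : K →+* L) (ε : 𝓞 L), ∀ x : 𝓞 K, (A x : L) = (ε : L) * τ (x : K) := by
  have hmul (x y : 𝓞 K) : A x * A y = A 1 * A (x * y) := by
    refine sub_eq_zero.1 (eq_zero_of_infinite_isSplitPrime (hinf.mono ?_))
    rintro p ⟨hK, hsum, Q, hQ, hRS, hS⟩
    obtain ⟨P, hP, hPQ⟩ := exists_isSplitPrime_map_mem hK hQ hsum hRS hS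
    obtain ⟨n, hn⟩ := hP.exists_int_sub_mem x
    exact ⟨Q, hQ, map_mul_map_sub_mem A hPQ hn y⟩
  have hone : A 1 ≠ 0 := by
    obtain ⟨p, -, hsum, Q, hQ, hRS, hS⟩ := hinf.nonempty
    obtain ⟨x, hx⟩ := exists_map_ne_zero hQ.prime.ne_zero hsum hRS hS
    exact left_ne_zero_of_mul (hmul x x ▸ mul_ne_zero hx hx)
  obtain ⟨τ, hτ⟩ := exists_ringHom_fractionRing_eq_map_one_mul (K := K)
    ((algebraMap (𝓞 L) L).toAddMonoidHom.comp A.toAddMonoidHom)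
    (RingOfIntegers.coe_ne_zero_iff.2 hone)
    fun x y => by simpa using congrArg (algebraMap (𝓞 L) L) (hmul x y)
  exact ⟨τ, A 1, hτ⟩

end

/-- Main theorem on linear maps with local sieve conditions: a ℤ-linear map
`A : 𝓞 K → 𝓞 L` satisfying, for infinitely many prime numbers `p`, the local inclusion
condition, a nontriviality condition, a measure bound, and complete splitting of `p` in
`K` and `L`, is of the form `x ↦ ε·τ(x)` for a field embedding `τ : K → L` and some
`ε ∈ 𝓞 L`. -/
theorem linear_map_sieve_conditions {K L : Type*} [Field K] [NumberField K]
    [Field L] [NumberField L] (R : ResidueSieve K) (S : ResidueSieve L)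
    (A : 𝓞 K →ₗ[ℤ] 𝓞 L)
    (hinf : {p : ℕ | p.Prime ∧
      (∀ x : 𝓞 K,
        (∀ P : Ideal (𝓞 K), P.IsPrime → (p : 𝓞 K) ∈ P → ¬ R.Mem P x) →
        ∀ Q : Ideal (𝓞 L), Q.IsPrime → (p : 𝓞 L) ∈ Q → ¬ S.Mem Q (A x)) ∧
      (∀ Q : Ideal (𝓞 L), Q.IsPrime → (p : 𝓞 L) ∈ Q → ∃ x : 𝓞 K, S.Mem Q (A x)) ∧
      (∑' P : {P : Ideal (𝓞 K) // P.IsPrime ∧ (p : 𝓞 K) ∈ P}, R.meas P.1) < 1 ∧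
      SplitsCompletely K p ∧ SplitsCompletely L p}.Infinite) :
    ∃ (τ : K →+* L) (ε : 𝓞 L),
      ∀ x : 𝓞 K, (A x : L) = (ε : L) * τ (x : K) := by
  refine linear_map_sieve_conditions_general R S A (hinf.mono ?_)
  rintro p ⟨hp, hRS, hS, hsum, hK, hL⟩
  obtain ⟨Q, hQ⟩ := hL.exists_isSplitPrime hp
  exact ⟨hK, hsum, Q, hQ, fun x hx => hRS x hx Q hQ.isPrime hQ.natCast_mem,
    hS Q hQ.isPrime hQ.natCast_mem⟩
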